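/- Let d ∈ ℝⁿ, d ≠ 0, be a non-increasing direction for m at x₀, i.e. ⟨∇m_ℓ(x₀), d⟩ ≤ 0 for all ℓ = 1, …, k, and set w := − max_{1≤ℓ≤k} ⟨∇m_ℓ(x₀), d⟩ ≥ 0. Let q ∈ {1, …, k} be any index and let σ̄ ≥ min{Δ, ‖d‖_∞} be such that x₀ + σ·d/‖d‖_∞ ∈ B for all σ ∈ [0, σ̄]. Then m_q(x₀) − inf_{0 ≤ σ ≤ σ̄} m_q(x₀ + σ·d/‖d‖_∞) ≥ (w/2) · min{ w/(‖d‖_∞² · c · H), Δ/‖d‖_∞, 1 }. (Lemma 5.4.) -/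

import Mathlib

noncomputable section

/-- The ℓ^∞ (maximum) norm on Euclidean space. -/
def supNorm {n : ℕ} (v : EuclideanSpace ℝ (Fin n)) : ℝ :=
  ‖(WithLp.equiv 2 (Fin n → ℝ)) v‖

/-- Frobenius norm of the Hessian of `g : ℝⁿ → ℝ` at `x`. -/
def frobHess {n : ℕ} (g : EuclideanSpace ℝ (Fin n) → ℝ)
    (x : EuclideanSpace ℝ (Fin n)) : ℝ :=
  Real.sqrt (∑ i : Fin n, ∑ j : Fin n,
    (fderiv ℝ (fun y => fderiv ℝ g y (EuclideanSpace.single j (1:ℝ))) x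
      (EuclideanSpace.single i (1:ℝ))) ^ 2)

/-!
Along the ray `t ↦ x₀ + t • d` the function `m_q` starts with slope at most `-w`, and its second
derivative is at most `H ‖d‖₂² ≤ L := ‖d‖_∞² c H`, because the Frobenius norm dominates the Hessian
form. Taylor's inequality then gives a decrease of at least `w t - L t² / 2 ≥ w t / 2` as long as
`L t ≤ w`. The claim is the case `t = min {w / L, Δ / ‖d‖_∞, 1}`, the last two terms of the minimum
keeping the step within `[0, σ̄]`.
-/

theorem le_add_mul_add_sq_of_second_deriv_le {f f' f'' : ℝ → ℝ} {a b L : ℝ} (hab : a ≤ b)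
    (hf : ∀ t ∈ Set.Icc a b, HasDerivWithinAt f (f' t) (Set.Icc a b) t)
    (hf' : ∀ t ∈ Set.Icc a b, HasDerivWithinAt f' (f'' t) (Set.Icc a b) t)
    (hL : ∀ t ∈ Set.Icc a b, f'' t ≤ L) :
    f b ≤ f a + f' a * (b - a) + L / 2 * (b - a) ^ 2 := by
  have right_deriv {g : ℝ → ℝ} {g' t : ℝ} (ht : t ∈ Set.Ico a b)
      (hg : HasDerivWithinAt g g' (Set.Icc a b) t) : HasDerivWithinAt g g' (Set.Ici t) t :=
    hg.mono_of_mem_nhdsWithin (Icc_mem_nhdsGE_of_mem ht)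
  have hline (t : ℝ) : HasDerivAt (fun t => t - a) 1 t := (hasDerivAt_id t).sub_const a
  have slope_le : ∀ ⦃t⦄, t ∈ Set.Icc a b → f' t ≤ f' a + L * (t - a) := by
    refine image_le_of_deriv_right_le_deriv_boundary (B' := fun _ => L)
      (fun t ht => (hf' t ht).continuousWithinAt)
      (fun t ht => right_deriv ht (hf' t (Set.Ico_subset_Icc_self ht))) (by simp) (by fun_prop)
      (fun t _ => HasDerivAt.hasDerivWithinAt ?_) (fun t ht => hL t (Set.Ico_subset_Icc_self ht))
    simpa using ((hline t).const_mul L).const_add (f' a)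
  refine image_le_of_deriv_right_le_deriv_boundary
    (B := fun t => f a + f' a * (t - a) + L / 2 * (t - a) ^ 2) (B' := fun t => f' a + L * (t - a))
    (fun t ht => (hf t ht).continuousWithinAt)
    (fun t ht => right_deriv ht (hf t (Set.Ico_subset_Icc_self ht))) (by simp) (by fun_prop)
    (fun t _ => HasDerivAt.hasDerivWithinAt ?_)
    (fun t ht => slope_le (Set.Ico_subset_Icc_self ht)) (Set.right_mem_Icc.2 hab)
  refine ((((hline t).const_mul (f' a)).const_add (f a)).add
    (((hline t).pow 2).const_mul (L / 2))).congr_deriv ?_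
  simp only [Nat.cast_ofNat, Nat.add_one_sub_one, pow_one]
  ring

section Ray

variable {E : Type*} [NormedAddCommGroup E] [NormedSpace ℝ E] {g : E → ℝ} {U : Set E}
  {x d : E} {t L : ℝ}

theorem differentiableAt_fderiv_of_contDiffOn {F : Type*} [NormedAddCommGroup F] [NormedSpace ℝ F]
    {f : E → F} (hf : ContDiffOn ℝ 2 f U) (hU : IsOpen U) (hx : x ∈ U) :
    DifferentiableAt ℝ (fderiv ℝ f) x :=
  ((hf.fderiv_of_isOpen hU one_add_one_eq_two.le).differentiableOn one_ne_zero).differentiableAt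
    (hU.mem_nhds hx)

theorem le_quadratic_along_ray (hg : ContDiffOn ℝ 2 g U) (hU : IsOpen U) (ht : 0 ≤ t)
    (hray : ∀ r ∈ Set.Icc 0 t, x + r • d ∈ U)
    (hL : ∀ r ∈ Set.Icc 0 t, fderiv ℝ (fderiv ℝ g) (x + r • d) d d ≤ L) :
    g (x + t • d) ≤ g x + fderiv ℝ g x d * t + L / 2 * t ^ 2 := by
  have hline (r : ℝ) : HasDerivAt (fun r : ℝ => x + r • d) d r := by
    simpa using ((hasDerivAt_id r).smul_const d).const_add x
  have first_deriv : ∀ r ∈ Set.Icc 0 t,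
      HasDerivAt (fun r : ℝ => g (x + r • d)) (fderiv ℝ g (x + r • d) d) r := fun r hr =>
    ((hg.differentiableOn two_ne_zero).differentiableAt
      (hU.mem_nhds (hray r hr))).hasFDerivAt.comp_hasDerivAt r (hline r)
  have second_deriv : ∀ r ∈ Set.Icc 0 t, HasDerivAt (fun r : ℝ => fderiv ℝ g (x + r • d) d)
      (fderiv ℝ (fderiv ℝ g) (x + r • d) d d) r := fun r hr => by
    have := (differentiableAt_fderiv_of_contDiffOn hg hU
      (hray r hr)).hasFDerivAt.comp_hasDerivAt r (hline r)
    simpa using this.clm_apply (hasDerivAt_const r d)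
  simpa using le_add_mul_add_sq_of_second_deriv_le ht
    (fun r hr => (first_deriv r hr).hasDerivWithinAt)
    (fun r hr => (second_deriv r hr).hasDerivWithinAt) hL

theorem half_slope_mul_le_sub_along_ray {w : ℝ} (hg : ContDiffOn ℝ 2 g U) (hU : IsOpen U)
    (ht : 0 ≤ t) (hray : ∀ r ∈ Set.Icc 0 t, x + r • d ∈ U)
    (hL : ∀ r ∈ Set.Icc 0 t, fderiv ℝ (fderiv ℝ g) (x + r • d) d d ≤ L)
    (hslope : fderiv ℝ g x d ≤ -w) (hLt : L * t ≤ w) :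
    w / 2 * t ≤ g x - g (x + t • d) := by
  have htaylor := le_quadratic_along_ray hg hU ht hray hL
  have hlinear : fderiv ℝ g x d * t ≤ -w * t := mul_le_mul_of_nonneg_right hslope ht
  have hquadratic : L * t * t ≤ w * t := mul_le_mul_of_nonneg_right hLt ht
  linarith

theorem half_mul_min_le_sub_sInf_along_ray {w T : ℝ} (hg : ContDiffOn ℝ 2 g U) (hU : IsOpen U)
    (hT : 0 ≤ T) (hray : ∀ r ∈ Set.Icc 0 T, x + r • d ∈ U) (hL₀ : 0 ≤ L)
    (hL : ∀ r ∈ Set.Icc 0 T, fderiv ℝ (fderiv ℝ g) (x + r • d) d d ≤ L)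
    (hw : 0 ≤ w) (hslope : fderiv ℝ g x d ≤ -w) :
    w / 2 * min (w / L) T ≤ g x - sInf ((fun r : ℝ => g (x + r • d)) '' Set.Icc 0 T) := by
  set t := min (w / L) T
  have ht : 0 ≤ t := by positivity
  have htT : t ≤ T := min_le_right _ _
  -- This includes `L = 0`, where `w / L = 0` and the step `t` is zero.
  have hLt : L * t ≤ w := by
    rw [mul_comm]
    exact mul_le_of_le_div₀ hw hL₀ (min_le_left _ _)
  have hsub : Set.Icc 0 t ⊆ Set.Icc 0 T := Set.Icc_subset_Icc_right htT
  have hbdd : BddBelow ((fun r : ℝ => g (x + r • d)) '' Set.Icc 0 T) :=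
    isCompact_Icc.bddBelow_image (hg.continuousOn.comp (by fun_prop) hray)
  calc w / 2 * t ≤ g x - g (x + t • d) :=
        half_slope_mul_le_sub_along_ray hg hU ht (fun r hr => hray r (hsub hr))
          (fun r hr => hL r (hsub hr)) hslope hLt
    _ ≤ g x - sInf ((fun r : ℝ => g (x + r • d)) '' Set.Icc 0 T) :=
        sub_le_sub_left (csInf_le hbdd ⟨t, ⟨ht, htT⟩, rfl⟩) _

end Ray

section OrthonormalBasis

variable {ι κ E F : Type*} [Fintype ι] [Fintype κ]
  [NormedAddCommGroup E] [InnerProductSpace ℝ E] [NormedAddCommGroup F] [InnerProductSpace ℝ F]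

theorem sq_apply_le_sum_sq_basis_mul_norm_sq (b : OrthonormalBasis ι ℝ E) (φ : E →L[ℝ] ℝ) (v : E) :
    φ v ^ 2 ≤ (∑ i, φ (b i) ^ 2) * ‖v‖ ^ 2 := by
  have hφ : φ v = ∑ i, φ (b i) * inner ℝ (b i) v := by
    conv_lhs => rw [← b.sum_repr' v]
    simp only [map_sum, map_smul, smul_eq_mul, mul_comm]
  have hv : ‖v‖ ^ 2 = ∑ i, inner ℝ (b i) v ^ 2 := by
    simpa only [Real.norm_eq_abs, sq_abs] using (b.sum_sq_norm_inner_right v).symm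
  rw [hφ, hv]
  exact Finset.sum_mul_sq_le_sq_mul_sq _ _ _

theorem apply_apply_le_sqrt_sum_sq_basis_mul_norm_mul_norm (b : OrthonormalBasis ι ℝ E)
    (b' : OrthonormalBasis κ ℝ F) (A : E →L[ℝ] F →L[ℝ] ℝ) (u : E) (v : F) :
    A u v ≤ √(∑ i, ∑ j, A (b i) (b' j) ^ 2) * (‖u‖ * ‖v‖) := by
  refine le_of_sq_le_sq ?_ (by positivity)
  calc A u v ^ 2 ≤ (∑ i, A (b i) v ^ 2) * ‖u‖ ^ 2 :=
        sq_apply_le_sum_sq_basis_mul_norm_sq b (A.flip v) u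
    _ ≤ (∑ i, (∑ j, A (b i) (b' j) ^ 2) * ‖v‖ ^ 2) * ‖u‖ ^ 2 := by
        gcongr with i
        exact sq_apply_le_sum_sq_basis_mul_norm_sq b' (A (b i)) v
    _ = (√(∑ i, ∑ j, A (b i) (b' j) ^ 2) * (‖u‖ * ‖v‖)) ^ 2 := by
        rw [mul_pow, Real.sq_sqrt (by positivity), ← Finset.sum_mul]
        ring

end OrthonormalBasis

theorem le_ciSup_ciSup_of_bddAbove_image {ι α β : Type*} [Finite ι]
    [ConditionallyCompleteLattice β] {F : ι → α → β} {s : Set α}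
    (hF : ∀ i, BddAbove (F i '' s)) (i : ι) {y : α} (hy : y ∈ s) :
    F i y ≤ ⨆ i, ⨆ y : s, F i y := by
  have hbdd : BddAbove (Set.range fun y : s => F i y) := by
    simpa only [Set.image_eq_range] using hF i
  exact (le_ciSup hbdd ⟨y, hy⟩).trans
    (le_ciSup (f := fun i => ⨆ y : s, F i y) (Set.finite_range _).bddAbove i)

section Euclidean

variable {n : ℕ} {g : EuclideanSpace ℝ (Fin n) → ℝ} {U : Set (EuclideanSpace ℝ (Fin n))}
  {x d : EuclideanSpace ℝ (Fin n)}

theorem supNorm_pos (hd : d ≠ 0) : 0 < supNorm d := by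
  rw [supNorm, norm_pos_iff]
  simpa using hd

theorem frobHess_nonneg : 0 ≤ frobHess g x :=
  Real.sqrt_nonneg _

theorem frobHess_eq_sqrt_sum_sq_basisFun (hg : DifferentiableAt ℝ (fderiv ℝ g) x) :
    frobHess g x = √(∑ i, ∑ j, fderiv ℝ (fderiv ℝ g) x (EuclideanSpace.basisFun (Fin n) ℝ i)
      (EuclideanSpace.basisFun (Fin n) ℝ j) ^ 2) := by
  have hflip (v : EuclideanSpace ℝ (Fin n)) :
      fderiv ℝ (fun y => fderiv ℝ g y v) x = (fderiv ℝ (fderiv ℝ g) x).flip v := by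
    simpa using (hg.hasFDerivAt.clm_apply (hasFDerivAt_const v x)).fderiv
  simp only [frobHess, hflip, ContinuousLinearMap.flip_apply, EuclideanSpace.basisFun_apply]

theorem continuousOn_frobHess (hg : ContDiffOn ℝ 2 g U) (hU : IsOpen U) :
    ContinuousOn (frobHess g) U := by
  have hfderiv : ContDiffOn ℝ 1 (fderiv ℝ g) U := hg.fderiv_of_isOpen hU one_add_one_eq_two.le
  have hhess : ContinuousOn (fderiv ℝ (fderiv ℝ g)) U :=
    hfderiv.continuousOn_fderiv_of_isOpen hU le_rfl
  refine ContinuousOn.congr ?_ fun x hx =>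
    frobHess_eq_sqrt_sum_sq_basisFun (differentiableAt_fderiv_of_contDiffOn hg hU hx)
  fun_prop

theorem fderiv_fderiv_apply_self_le_frobHess_mul (hg : DifferentiableAt ℝ (fderiv ℝ g) x)
    (v : EuclideanSpace ℝ (Fin n)) :
    fderiv ℝ (fderiv ℝ g) x v v ≤ frobHess g x * ‖v‖ ^ 2 := by
  rw [frobHess_eq_sqrt_sum_sq_basisFun hg, sq ‖v‖]
  exact apply_apply_le_sqrt_sum_sq_basis_mul_norm_mul_norm _ _ _ v v

theorem decrease_along_nonincreasing_direction_general (hU : IsOpen U) (hg : ContDiffOn ℝ 2 g U)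
    (hd : d ≠ 0) {w H c Δ σbar : ℝ} (hw : 0 ≤ w) (hslope : fderiv ℝ g x d ≤ -w)
    (hΔ : 0 ≤ Δ) (hσbar : min Δ (supNorm d) ≤ σbar) (hc : ‖d‖ ^ 2 ≤ supNorm d ^ 2 * c)
    (hray : ∀ σ ∈ Set.Icc 0 σbar, x + (σ / supNorm d) • d ∈ U)
    (hH : ∀ σ ∈ Set.Icc 0 σbar, frobHess g (x + (σ / supNorm d) • d) ≤ H) :
    w / 2 * min (w / (supNorm d ^ 2 * c * H)) (min (Δ / supNorm d) 1) ≤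
      g x - sInf ((fun σ => g (x + (σ / supNorm d) • d)) '' Set.Icc 0 σbar) := by
  have hs : 0 < supNorm d := supNorm_pos hd
  have hσbar₀ : 0 ≤ σbar := (le_min hΔ hs.le).trans hσbar
  have hH₀ : 0 ≤ H := frobHess_nonneg.trans (hH 0 (Set.left_mem_Icc.2 hσbar₀))
  have hIcc : (fun σ => σ / supNorm d) '' Set.Icc 0 σbar = Set.Icc 0 (σbar / supNorm d) := by
    simp only [div_eq_mul_inv, Set.image_mul_right_Icc' _ _ (inv_pos.2 hs), zero_mul]
  have hray' : ∀ r ∈ Set.Icc 0 (σbar / supNorm d), x + r • d ∈ U := by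
    rwa [← hIcc, Set.forall_mem_image]
  have hH' : ∀ r ∈ Set.Icc 0 (σbar / supNorm d), frobHess g (x + r • d) ≤ H := by
    rwa [← hIcc, Set.forall_mem_image]
  have hdL : H * ‖d‖ ^ 2 ≤ supNorm d ^ 2 * c * H :=
    (mul_le_mul_of_nonneg_left hc hH₀).trans_eq (mul_comm _ _)
  have hcurv : ∀ r ∈ Set.Icc 0 (σbar / supNorm d),
      fderiv ℝ (fderiv ℝ g) (x + r • d) d d ≤ supNorm d ^ 2 * c * H := fun r hr =>
    calc fderiv ℝ (fderiv ℝ g) (x + r • d) d d ≤ frobHess g (x + r • d) * ‖d‖ ^ 2 :=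
          fderiv_fderiv_apply_self_le_frobHess_mul
            (differentiableAt_fderiv_of_contDiffOn hg hU (hray' r hr)) d
      _ ≤ H * ‖d‖ ^ 2 := mul_le_mul_of_nonneg_right (hH' r hr) (sq_nonneg _)
      _ ≤ supNorm d ^ 2 * c * H := hdL
  have hstep : min (Δ / supNorm d) 1 ≤ σbar / supNorm d := by
    rw [← div_self hs.ne', min_div_div_right hs.le]
    gcongr
  have hdecrease := half_mul_min_le_sub_sInf_along_ray hg hU (by positivity) hray'
    (le_trans (by positivity) hdL) hcurv hw hslope
  rw [← hIcc, Set.image_image] at hdecrease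
  refine le_trans ?_ hdecrease
  gcongr

end Euclidean

/-- Lemma 5.4: minimizing a model `m_q` along a non-increasing direction `d`
within the trust region `B` achieves a guaranteed decrease. -/
theorem decrease_along_nonincreasing_direction
    (n k : ℕ) (hk : 1 ≤ k)
    (X : Set (EuclideanSpace ℝ (Fin n)))
    (hXne : X.Nonempty) (hXconv : Convex ℝ X) (hXcomp : IsCompact X)
    (m : Fin k → EuclideanSpace ℝ (Fin n) → ℝ)
    (U : Set (EuclideanSpace ℝ (Fin n))) (hUopen : IsOpen U) (hXU : X ⊆ U)
    (hm : ∀ ℓ, ContDiffOn ℝ 2 (m ℓ) U)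
    (x₀ : EuclideanSpace ℝ (Fin n)) (hx₀ : x₀ ∈ X)
    (Δ : ℝ) (hΔ : 0 < Δ)
    (B : Set (EuclideanSpace ℝ (Fin n))) (hB : B = {y ∈ X | supNorm (y - x₀) ≤ Δ})
    -- `H = max_ℓ sup_{x∈B} ‖∇²m_ℓ(x)‖_F`
    (H : ℝ) (hH : H = ⨆ ℓ : Fin k, ⨆ y : B, frobHess (m ℓ) (y : EuclideanSpace ℝ (Fin n)))
    -- norm-relating constant: `‖v‖₂ ≤ √c·‖v‖_∞`
    (c : ℝ) (hc : 0 < c)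
    (hcn : ∀ v : EuclideanSpace ℝ (Fin n), ‖v‖ ≤ Real.sqrt c * supNorm v)
    -- `d ≠ 0` a non-increasing direction for `m` at `x₀`
    (d : EuclideanSpace ℝ (Fin n)) (hd : d ≠ 0)
    (hdesc : ∀ ℓ, fderiv ℝ (m ℓ) x₀ d ≤ 0)
    (w : ℝ) (hw : w = -(⨆ ℓ, fderiv ℝ (m ℓ) x₀ d))
    (q : Fin k)
    (σbar : ℝ) (hσbar : min Δ (supNorm d) ≤ σbar)
    (hfeas : ∀ σ ∈ Set.Icc (0:ℝ) σbar, x₀ + (σ / supNorm d) • d ∈ B) :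
    m q x₀ - sInf ((fun σ => m q (x₀ + (σ / supNorm d) • d)) '' Set.Icc (0:ℝ) σbar)
      ≥ (w / 2) * min (w / (supNorm d ^ 2 * c * H)) (min (Δ / supNorm d) 1) := by
  subst hB hH hw
  have hdsq : ‖d‖ ^ 2 ≤ supNorm d ^ 2 * c := by
    simpa only [mul_pow, Real.sq_sqrt hc.le, mul_comm] using
      pow_le_pow_left₀ (norm_nonneg d) (hcn d) 2
  have hslope : fderiv ℝ (m q) x₀ d ≤ -(-⨆ ℓ, fderiv ℝ (m ℓ) x₀ d) := by
    rw [neg_neg]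
    exact le_ciSup (f := fun ℓ => fderiv ℝ (m ℓ) x₀ d) (Set.finite_range _).bddAbove q
  have hbdd : ∀ ℓ, BddAbove (frobHess (m ℓ) '' {y ∈ X | supNorm (y - x₀) ≤ Δ}) := fun ℓ =>
    (hXcomp.bddAbove_image ((continuousOn_frobHess (hm ℓ) hUopen).mono hXU)).mono
      (Set.image_mono (Set.sep_subset _ _))
  exact decrease_along_nonincreasing_direction_general hUopen (hm q) hd
    (neg_nonneg.2 (Real.iSup_nonpos hdesc)) hslope hΔ.le hσbar hdsq
    (fun σ hσ => hXU (hfeas σ hσ).1)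
    (fun σ hσ => le_ciSup_ciSup_of_bddAbove_image hbdd q (hfeas σ hσ))
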